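/- In the setting of the dgl (L₁, D) built from minimal Quillen models of 2-cones, let A ∈ 𝕃(V₀), let Ā ∈ 𝕄(V₀) be any representative of A, and let T ∈ 𝕃(W₀). Then D(Ā ⋆ T) = −σ_A(T) + (−1)^{|A||T|} σ_T(A). -/

import Mathlib

universe u

/-- A graded Lie algebra over `ℚ`: a `ℤ`-graded vector space with a bilinear bracket
satisfying graded antisymmetry and the graded Jacobi identity on homogeneous elements. -/
structure GLA (Lc : Type u) [AddCommGroup Lc] [Module ℚ Lc] where
  grade : ℤ → Submodule ℚ Lc
  internal : DirectSum.IsInternal grade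
  br : Lc →ₗ[ℚ] Lc →ₗ[ℚ] Lc
  br_mem : ∀ {i j : ℤ} {x y : Lc}, x ∈ grade i → y ∈ grade j → br x y ∈ grade (i + j)
  antisymm : ∀ {i j : ℤ} {x y : Lc}, x ∈ grade i → y ∈ grade j →
      br x y = -((-1 : ℚ) ^ (i * j) • br y x)
  jacobi : ∀ {i j : ℤ} {x y : Lc} (z : Lc), x ∈ grade i → y ∈ grade j →
      br x (br y z) = br (br x y) z + (-1 : ℚ) ^ (i * j) • br y (br x z)

namespace GLA

variable {Lc : Type u} [AddCommGroup Lc] [Module ℚ Lc]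

/-- The Lie subalgebra (as a submodule closed under the bracket) generated by
a graded family of subspaces. -/
def lieSub (G : GLA Lc) (p : ℤ → Submodule ℚ Lc) : Submodule ℚ Lc :=
  sInf {q | (∀ i, p i ≤ q) ∧ ∀ x ∈ q, ∀ y ∈ q, G.br x y ∈ q}

/-- The submodule of decomposable elements of `L`: the span of all brackets. -/
def dec (G : GLA Lc) : Submodule ℚ Lc :=
  Submodule.span ℚ {x : Lc | ∃ a b : Lc, x = G.br a b}

/-- A graded Lie algebra is reduced if it vanishes in degrees `≤ 0`. -/
def Reduced (G : GLA Lc) : Prop := ∀ i : ℤ, i ≤ 0 → G.grade i = ⊥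

end GLA


/-- Trees of the free graded linear magma on the graded subspace family `P`
(homogeneous generators and formal binary products). -/
inductive Mag {Lc : Type u} [AddCommGroup Lc] [Module ℚ Lc]
    (P : ℤ → Submodule ℚ Lc) : Type u
  | of (i : ℤ) (v : Lc) (hv : v ∈ P i) : Mag P
  | mul : Mag P → Mag P → Mag P

namespace Mag

variable {Lc : Type u} [AddCommGroup Lc] [Module ℚ Lc] {P : ℤ → Submodule ℚ Lc}

/-- Degree of a magma element. -/
def deg : Mag P → ℤ
  | of i _ _ => i
  | mul A B => deg A + deg B

/-- The class of a magma element in the (free) graded Lie algebra. -/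
def real (G : GLA Lc) : Mag P → Lc
  | of _ v _ => v
  | mul A B => G.br (real G A) (real G B)

/-- The star operator `⋆ : 𝕄(V) ⊗ 𝕃(W) → L`, applied to a homogeneous element `T`
of degree `t`, defined recursively by `a ⋆ T = 0` for a generator `a` and
`AB ⋆ T = (-1)^{|A|} σ_Ā σ_B̄ (T) + (-1)^{|B||T|} [A ⋆ T, B̄] + [Ā, B ⋆ T]`. -/
def star (G : GLA Lc) (sg : ℤ → Lc → (Lc →ₗ[ℚ] Lc)) (t : ℤ) : Mag P → Lc → Lc
  | of _ _ _, _ => 0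
  | mul A B, T =>
      (-1 : ℚ) ^ deg A • sg (deg A) (real G A) (sg (deg B) (real G B) T)
        + (-1 : ℚ) ^ (deg B * t) • G.br (star G sg t A T) (real G B)
        + G.br (real G A) (star G sg t B T)

end Mag

theorem sgn_ez (n : ℤ) : (-1 : ℚ) ^ n = if Even n then 1 else -1 := by
  split_ifs with h
  · exact h.neg_one_zpow
  · exact (Int.not_even_iff_odd.mp h).neg_one_zpow

namespace GLA

variable {Lc : Type u} [AddCommGroup Lc] [Module ℚ Lc]

theorem le_lieSub (G : GLA Lc) (p : ℤ → Submodule ℚ Lc) (i : ℤ) : p i ≤ G.lieSub p :=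
  le_sInf fun _ hq => hq.1 i

theorem br_lieSub (G : GLA Lc) (p : ℤ → Submodule ℚ Lc) {x y : Lc}
    (hx : x ∈ G.lieSub p) (hy : y ∈ G.lieSub p) : G.br x y ∈ G.lieSub p := by
  rw [lieSub, Submodule.mem_sInf] at *
  exact fun q hq => hq.2 _ (hx q hq) _ (hy q hq)

theorem lieSub_mono (G : GLA Lc) {p p' : ℤ → Submodule ℚ Lc} (h : ∀ i, p i ≤ p' i) :
    G.lieSub p ≤ G.lieSub p' :=
  sInf_le ⟨fun i => (h i).trans (G.le_lieSub p' i), fun _ hx _ hy => G.br_lieSub p' hx hy⟩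

/-- Two linear maps agreeing on generators, whose agreement is stable under brackets of
homogeneous elements, agree on the generated Lie subalgebra. -/
theorem ext_lieSub (G : GLA Lc) (p : ℤ → Submodule ℚ Lc) (hp : ∀ i, p i ≤ G.grade i)
    (f g : Lc →ₗ[ℚ] Lc) (hgen : ∀ i, ∀ v ∈ p i, f v = g v)
    (hstep : ∀ m n x y, x ∈ G.grade m → y ∈ G.grade n → x ∈ G.lieSub p → y ∈ G.lieSub p →
      f x = g x → f y = g y → f (G.br x y) = g (G.br x y)) :
    ∀ x ∈ G.lieSub p, f x = g x := by
  let H : Set Lc := {x | ∃ n, x ∈ G.grade n ∧ x ∈ G.lieSub p ∧ f x = g x}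
  have hH : G.lieSub p ≤ Submodule.span ℚ H := by
    refine sInf_le ⟨fun i v hv => Submodule.subset_span
      ⟨i, hp i hv, G.le_lieSub p i hv, hgen i v hv⟩, fun x hx y hy => ?_⟩
    induction hx using Submodule.span_induction with
    | zero => simp
    | add a b _ _ ha hb => rw [map_add, LinearMap.add_apply]; exact add_mem ha hb
    | smul c a _ ha => rw [map_smul, LinearMap.smul_apply]; exact Submodule.smul_mem _ _ ha
    | mem a ha =>
      induction hy using Submodule.span_induction with
      | zero => simp
      | add c b _ _ hc hb => rw [map_add]; exact add_mem hc hb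
      | smul c b _ hb => rw [map_smul]; exact Submodule.smul_mem _ _ hb
      | mem b hb =>
        obtain ⟨m, h1, h2, h3⟩ := ha
        obtain ⟨n, h4, h5, h6⟩ := hb
        exact Submodule.subset_span ⟨m + n, G.br_mem h1 h4, G.br_lieSub p h2 h5,
          hstep m n a b h1 h4 h2 h5 h3 h6⟩
  intro x hx
  replace hx := hH hx
  induction hx using Submodule.span_induction with
  | zero => simp
  | add a b _ _ ha hb => rw [map_add, map_add, ha, hb]
  | smul c a _ ha => rw [map_smul, map_smul, ha]
  | mem a ha => exact ha.choose_spec.2.2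

end GLA

/-- Lemma 3.17.  In the dgl `(L₁, D)` built from minimal Quillen models
of 2-cones, let `A ∈ 𝕃(V₀)`, let `Ā ∈ 𝕄(V₀)` be any representative of `A` (a magma element
whose class is `A`), and let `T ∈ 𝕃(W₀)` be homogeneous of degree `t`.  Then
`D(Ā ⋆ T) = -σ_A(T) + (-1)^{|A||T|} σ_T(A)`. -/
theorem statement14
    {Lc : Type u} [AddCommGroup Lc] [Module ℚ Lc] (G : GLA Lc)
    (V0 V1 W0 W1 Sp : ℤ → Submodule ℚ Lc)
    -- the ambient free Lie algebra is reduced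
    (hred : G.Reduced)
    (hV0 : ∀ i, V0 i ≤ G.grade i) (hV1 : ∀ i, V1 i ≤ G.grade i)
    (hW0 : ∀ i, W0 i ≤ G.grade i) (hW1 : ∀ i, W1 i ≤ G.grade i)
    (hSp : ∀ i, Sp i ≤ G.grade i)
    -- the suspension `s(v ⊗ w)`, bilinear, of degree `|v|+|w|+1`; in `L₁` only
    -- `s(V₀⊗W₀) ⊕ s(V₁⊗W₀) ⊕ s(V₀⊗W₁)` is present
    (sus : Lc →ₗ[ℚ] Lc →ₗ[ℚ] Lc)
    (hsus00 : ∀ {i j : ℤ} {v w : Lc}, v ∈ V0 i → w ∈ W0 j → sus v w ∈ Sp (i + j + 1))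
    (hsus10 : ∀ {i j : ℤ} {v w : Lc}, v ∈ V1 i → w ∈ W0 j → sus v w ∈ Sp (i + j + 1))
    (hsus01 : ∀ {i j : ℤ} {v w : Lc}, v ∈ V0 i → w ∈ W1 j → sus v w ∈ Sp (i + j + 1))
    -- `L₁` is generated by `V ⊕ W ⊕ s(V₀⊗W₀) ⊕ s(V₁⊗W₀) ⊕ s(V₀⊗W₁)`
    (hgen : G.lieSub (fun i => V0 i ⊔ V1 i ⊔ W0 i ⊔ W1 i ⊔ Sp i) = ⊤)
    -- the derivations `σ_A` for homogeneous `A ∈ 𝕃(V ⊕ W)`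
    (sg : ℤ → Lc → (Lc →ₗ[ℚ] Lc))
    (hsg_grade : ∀ {a : ℤ} {A : Lc}, A ∈ G.lieSub (fun i => V0 i ⊔ V1 i ⊔ W0 i ⊔ W1 i) →
      A ∈ G.grade a → ∀ {n : ℤ} {x : Lc}, x ∈ G.grade n → sg a A x ∈ G.grade (n + a + 1))
    (hsg_der : ∀ {a : ℤ} {A : Lc}, A ∈ G.lieSub (fun i => V0 i ⊔ V1 i ⊔ W0 i ⊔ W1 i) →
      A ∈ G.grade a → ∀ {n : ℤ} (x y : Lc), x ∈ G.grade n →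
      sg a A (G.br x y) = G.br (sg a A x) y + (-1 : ℚ) ^ ((a + 1) * n) • G.br x (sg a A y))
    (hsg_vw : ∀ {i j : ℤ} {v w : Lc}, v ∈ V0 i ⊔ V1 i → w ∈ W0 j → sg i v w = sus v w)
    (hsg_vw' : ∀ {i j : ℤ} {v w : Lc}, v ∈ V0 i → w ∈ W1 j → sg i v w = sus v w)
    (hsg_wv : ∀ {i j : ℤ} {v w : Lc}, v ∈ V0 i ⊔ V1 i → w ∈ W0 j →
      sg j w v = (-1 : ℚ) ^ (i * j) • sus v w)
    (hsg_wv' : ∀ {i j : ℤ} {v w : Lc}, v ∈ V0 i → w ∈ W1 j →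
      sg j w v = (-1 : ℚ) ^ (i * j) • sus v w)
    (hsg_vv : ∀ {i i' : ℤ} {v v' : Lc}, v ∈ V0 i ⊔ V1 i → v' ∈ V0 i' ⊔ V1 i' →
      sg i v v' = 0)
    (hsg_ww : ∀ {j j' : ℤ} {w w' : Lc}, w ∈ W0 j ⊔ W1 j → w' ∈ W0 j' ⊔ W1 j' →
      sg j w w' = 0)
    (hsg_vS : ∀ {i k : ℤ} {v x : Lc}, v ∈ V0 i ⊔ V1 i → x ∈ Sp k → sg i v x = 0)
    (hsg_wS : ∀ {j k : ℤ} {w x : Lc}, w ∈ W0 j ⊔ W1 j → x ∈ Sp k → sg j w x = 0)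
    (hsg_Av : ∀ {a : ℤ} {A : Lc}, A ∈ G.lieSub (fun i => V0 i ⊔ V1 i ⊔ W0 i ⊔ W1 i) →
      A ∈ G.grade a → ∀ {i : ℤ} {v : Lc}, v ∈ V0 i ⊔ V1 i →
      sg a A v = (-1 : ℚ) ^ (i * a) • sg i v A)
    (hsg_Aw : ∀ {a : ℤ} {A : Lc}, A ∈ G.lieSub (fun i => V0 i ⊔ V1 i ⊔ W0 i ⊔ W1 i) →
      A ∈ G.grade a → ∀ {j : ℤ} {w : Lc}, w ∈ W0 j ⊔ W1 j →
      sg a A w = (-1 : ℚ) ^ (j * a) • sg j w A)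
    (hsg_AS : ∀ {a : ℤ} {A : Lc}, A ∈ G.lieSub (fun i => V0 i ⊔ V1 i ⊔ W0 i ⊔ W1 i) →
      A ∈ G.grade a → ∀ {k : ℤ} {x : Lc}, x ∈ Sp k → sg a A x = 0)
    -- the degree `-1` derivation `D` of `L₁`
    (D : Lc →ₗ[ℚ] Lc)
    (hD_grade : ∀ {i : ℤ} {x : Lc}, x ∈ G.grade i → D x ∈ G.grade (i - 1))
    (hD_der : ∀ {i : ℤ} (x y : Lc), x ∈ G.grade i →
      D (G.br x y) = G.br (D x) y + (-1 : ℚ) ^ ((-1 : ℤ) * i) • G.br x (D y))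
    -- `D = ∂_V` on `V`, `D = ∂_W` on `W`, with `∂(V₀) = ∂(W₀) = 0`,
    -- `∂(V₁) ⊆ 𝕃(V₀)` and `∂(W₁) ⊆ 𝕃(W₀)`
    (hD_V0 : ∀ {i : ℤ} {v : Lc}, v ∈ V0 i → D v = 0)
    (hD_W0 : ∀ {j : ℤ} {w : Lc}, w ∈ W0 j → D w = 0)
    (hD_V1 : ∀ {i : ℤ} {v : Lc}, v ∈ V1 i → D v ∈ G.lieSub V0)
    (hD_W1 : ∀ {j : ℤ} {w : Lc}, w ∈ W1 j → D w ∈ G.lieSub W0)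
    -- minimality of the two Quillen models
    (hD_V1dec : ∀ {i : ℤ} {v : Lc}, v ∈ V1 i → D v ∈ G.dec)
    (hD_W1dec : ∀ {j : ℤ} {w : Lc}, w ∈ W1 j → D w ∈ G.dec)
    -- the value of `D` on the suspension generators
    (hD_sus00 : ∀ {i j : ℤ} {v w : Lc}, v ∈ V0 i → w ∈ W0 j → D (sus v w) = G.br v w)
    (hD_sus10 : ∀ {i j : ℤ} {v w : Lc}, v ∈ V1 i → w ∈ W0 j →
      D (sus v w) = G.br v w - (-1 : ℚ) ^ ((i + 1) * j) • sg j w (D v))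
    (hD_sus01 : ∀ {i j : ℤ} {v w : Lc}, v ∈ V0 i → w ∈ W1 j →
      D (sus v w) = G.br v w - (-1 : ℚ) ^ i • sg i v (D w))
    -- `(L₁, D)` is a dgl
    (hDD : ∀ x : Lc, D (D x) = 0)
 :
    ∀ (M : Mag V0) (A : Lc), Mag.real G M = A → A ∈ G.lieSub V0 →
      A ∈ G.grade (Mag.deg M) →
    ∀ {t : ℤ} {T : Lc}, T ∈ G.lieSub W0 → T ∈ G.grade t →
      D (Mag.star G sg t M T)
        = -(sg (Mag.deg M) A T) + (-1 : ℚ) ^ (Mag.deg M * t) • sg t T A := by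
  have inV : ∀ {x}, x ∈ G.lieSub V0 → x ∈ G.lieSub (fun i => V0 i ⊔ V1 i ⊔ W0 i ⊔ W1 i) :=
    fun h => G.lieSub_mono (fun i => le_sup_of_le_left (le_sup_of_le_left le_sup_left)) h
  have inW : ∀ {x}, x ∈ G.lieSub W0 → x ∈ G.lieSub (fun i => V0 i ⊔ V1 i ⊔ W0 i ⊔ W1 i) :=
    fun h => G.lieSub_mono (fun i => le_sup_of_le_left le_sup_right) h
  have v0 : ∀ {i v}, v ∈ V0 i → v ∈ V0 i ⊔ V1 i := fun h => Submodule.mem_sup_left h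
  have w0 : ∀ {i v}, v ∈ W0 i → v ∈ W0 i ⊔ W1 i := fun h => Submodule.mem_sup_left h
  have gV : ∀ {i v}, v ∈ V0 i → v ∈ G.lieSub V0 := fun h => G.le_lieSub V0 _ h
  have gW : ∀ {i v}, v ∈ W0 i → v ∈ G.lieSub W0 := fun h => G.le_lieSub W0 _ h
  -- `D` vanishes on `𝕃(V₀)` and `𝕃(W₀)`
  have DV : ∀ x ∈ G.lieSub V0, D x = 0 := by
    refine G.ext_lieSub V0 hV0 D 0 (fun i v hv => hD_V0 hv) ?_
    intro m n x y hx hy _ _ h1 h2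
    rw [LinearMap.zero_apply] at *
    rw [hD_der x y hx, h1, h2]; simp
  have DW : ∀ x ∈ G.lieSub W0, D x = 0 := by
    refine G.ext_lieSub W0 hW0 D 0 (fun i v hv => hD_W0 hv) ?_
    intro m n x y hx hy _ _ h1 h2
    rw [LinearMap.zero_apply] at *
    rw [hD_der x y hx, h1, h2]; simp
  -- `σ_A` vanishes on `𝕃(V₀)` for `A ∈ 𝕃(V₀)`
  have svV : ∀ {i v}, v ∈ V0 i → ∀ x ∈ G.lieSub V0, sg i v x = 0 := by
    intro i v hv
    refine G.ext_lieSub V0 hV0 (sg i v) 0 (fun k u hu => hsg_vv (v0 hv) (v0 hu)) ?_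
    intro m n x y hx hy _ _ h1 h2
    rw [LinearMap.zero_apply] at *
    rw [hsg_der (inV (gV hv)) (hV0 i hv) x y hx, h1, h2]; simp
  have sAV : ∀ {a A}, A ∈ G.lieSub V0 → A ∈ G.grade a → ∀ x ∈ G.lieSub V0, sg a A x = 0 := by
    intro a A hA hAa
    refine G.ext_lieSub V0 hV0 (sg a A) 0 (fun k u hu => ?_) ?_
    · rw [hsg_Av (inV hA) hAa (v0 hu), svV hu A hA]; simp
    intro m n x y hx hy _ _ h1 h2
    rw [LinearMap.zero_apply] at *
    rw [hsg_der (inV hA) hAa x y hx, h1, h2]; simp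
  -- `D σ_w = - ad w` on `𝕃(V₀)`
  have F1 : ∀ {j w}, w ∈ W0 j → ∀ x ∈ G.lieSub V0, D (sg j w x) = -G.br w x := by
    intro j w hw
    refine G.ext_lieSub V0 hV0 (D ∘ₗ sg j w) (-G.br w) (fun i v hv => ?_) ?_
    · simp only [LinearMap.comp_apply, LinearMap.neg_apply]
      rw [hsg_wv (v0 hv) hw, map_smul, hD_sus00 hv hw, G.antisymm (hW0 j hw) (hV0 i hv),
        mul_comm j i, neg_neg]
    intro m n x y hx hy hxV hyV h1 h2
    simp only [LinearMap.comp_apply, LinearMap.neg_apply] at *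
    rw [hsg_der (inW (gW hw)) (hW0 j hw) x y hx, map_add, map_smul,
      hD_der _ y (hsg_grade (inW (gW hw)) (hW0 j hw) hx), hD_der x _ hx, DV x hxV, DV y hyV,
      h1, h2, G.jacobi y (hW0 j hw) hx]
    simp only [map_zero, map_neg, LinearMap.neg_apply, LinearMap.zero_apply, smul_smul]
    by_cases hj : Even j <;> by_cases hm : Even m <;>
      simp only [sgn_ez, Int.even_sub, even_neg, Int.not_even_one, even_two, if_true, if_false, not_true_eq_false, not_false_eq_true, true_iff, iff_true, false_iff, iff_false, true_or, or_true, false_or, or_false, or_self, iff_self, Int.even_add, Int.even_mul, hj, hm] <;> module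
  -- `D σ_A = ad A` on `𝕃(W₀)`
  have F2 : ∀ {a A}, A ∈ G.lieSub V0 → A ∈ G.grade a → ∀ x ∈ G.lieSub W0,
      D (sg a A x) = G.br A x := by
    intro a A hA hAa
    refine G.ext_lieSub W0 hW0 (D ∘ₗ sg a A) (G.br A) (fun j w hw => ?_) ?_
    · simp only [LinearMap.comp_apply]
      rw [hsg_Aw (inV hA) hAa (w0 hw), map_smul, F1 hw A hA, G.antisymm hAa (hW0 j hw),
        mul_comm j a, smul_neg]
    intro m n x y hx hy hxV hyV h1 h2
    simp only [LinearMap.comp_apply] at *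
    rw [hsg_der (inV hA) hAa x y hx, map_add, map_smul,
      hD_der _ y (hsg_grade (inV hA) hAa hx), hD_der x _ hx, DW x hxV, DW y hyV,
      h1, h2, G.jacobi y hAa hx]
    simp only [map_zero, LinearMap.zero_apply, smul_smul]
    by_cases hj : Even a <;> by_cases hm : Even m <;>
      simp only [sgn_ez, Int.even_sub, even_neg, Int.not_even_one, even_two, if_true, if_false, not_true_eq_false, not_false_eq_true, true_iff, iff_true, false_iff, iff_false, true_or, or_true, false_or, or_false, or_self, iff_self, Int.even_add, Int.even_mul, hj, hm] <;> module
  -- the commutator `θ_A = [D, σ_A]`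
  let θ : ℤ → Lc → (Lc →ₗ[ℚ] Lc) := fun a A => D ∘ₗ sg a A + (-1 : ℚ) ^ a • (sg a A ∘ₗ D)
  have θdef : ∀ a A x, θ a A x = D (sg a A x) + (-1 : ℚ) ^ a • sg a A (D x) :=
    fun a A x => rfl
  have θder : ∀ {a A}, A ∈ G.lieSub V0 → A ∈ G.grade a → ∀ {n : ℤ} (x y : Lc), x ∈ G.grade n →
      θ a A (G.br x y) = G.br (θ a A x) y + (-1 : ℚ) ^ (a * n) • G.br x (θ a A y) := by
    intro a A hA hAa n x y hx
    simp only [θdef]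
    rw [hsg_der (inV hA) hAa x y hx, hD_der x y hx, map_add, map_add, map_smul, map_smul,
      hD_der _ y (hsg_grade (inV hA) hAa hx), hD_der x _ hx,
      hsg_der (inV hA) hAa _ y (hD_grade hx), hsg_der (inV hA) hAa x _ hx]
    simp only [map_add, map_smul, LinearMap.add_apply, LinearMap.smul_apply]
    by_cases hj : Even a <;> by_cases hm : Even n <;>
      simp only [sgn_ez, Int.even_sub, even_neg, Int.not_even_one, even_two, if_true, if_false, not_true_eq_false, not_false_eq_true, true_iff, iff_true, false_iff, iff_false, true_or, or_true, false_or, or_false, or_self, iff_self, Int.even_add, Int.even_sub, Int.even_mul, hj, hm] <;> module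
  have θV : ∀ {a A}, A ∈ G.lieSub V0 → A ∈ G.grade a → ∀ x ∈ G.lieSub V0, θ a A x = 0 := by
    intro a A hA hAa x hx
    rw [θdef, sAV hA hAa x hx, DV x hx]; simp
  have θW : ∀ {a A}, A ∈ G.lieSub V0 → A ∈ G.grade a → ∀ x ∈ G.lieSub W0,
      θ a A x = G.br A x := by
    intro a A hA hAa x hx
    rw [θdef, F2 hA hAa x hx, DW x hx]; simp
  have F3 : ∀ {a A}, A ∈ G.lieSub V0 → A ∈ G.grade a → ∀ {j w}, w ∈ W0 j →
      ∀ x ∈ G.lieSub V0, θ a A (sg j w x) = -((-1 : ℚ) ^ (a + j * a) • G.br (sg j w A) x) := by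
    intro a A hA hAa j w hw
    have hwA : sg j w A ∈ G.grade (a + j + 1) := hsg_grade (inW (gW hw)) (hW0 j hw) hAa
    refine G.ext_lieSub V0 hV0 (θ a A ∘ₗ sg j w)
      (-((-1 : ℚ) ^ (a + j * a) • G.br (sg j w A))) (fun i v hv => ?_) ?_
    · simp only [LinearMap.comp_apply, LinearMap.neg_apply, LinearMap.smul_apply]
      rw [hsg_wv (v0 hv) hw, map_smul, θdef, hD_sus00 hv hw, hsg_AS (inV hA) hAa (hsus00 hv hw),
        hsg_der (inV hA) hAa v w (hV0 i hv), sAV hA hAa v (gV hv), hsg_Aw (inV hA) hAa (w0 hw),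
        map_smul, G.antisymm (hV0 i hv) hwA]
      simp only [map_zero, LinearMap.zero_apply]
      by_cases hj : Even a <;> by_cases hm : Even j <;> by_cases hi : Even i <;>
        simp only [sgn_ez, Int.even_sub, even_neg, Int.not_even_one, even_two, if_true, if_false, not_true_eq_false, not_false_eq_true, true_iff, iff_true, false_iff, iff_false, true_or, or_true, false_or, or_false, or_self, iff_self, Int.even_add, Int.even_mul, hj, hm, hi] <;> module
    intro m n x y hx hy hxV hyV h1 h2
    simp only [LinearMap.comp_apply, LinearMap.neg_apply, LinearMap.smul_apply] at *
    rw [hsg_der (inW (gW hw)) (hW0 j hw) x y hx, map_add, map_smul,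
      θder hA hAa _ y (hsg_grade (inW (gW hw)) (hW0 j hw) hx), θder hA hAa x _ hx,
      θV hA hAa x hxV, θV hA hAa y hyV, h1, h2, G.jacobi y hwA hx]
    simp only [map_zero, map_neg, map_smul, LinearMap.neg_apply, LinearMap.smul_apply,
      LinearMap.zero_apply, smul_smul]
    by_cases hj : Even a <;> by_cases hm : Even j <;> by_cases hi : Even m <;>
        simp only [sgn_ez, Int.even_sub, even_neg, Int.not_even_one, even_two, if_true, if_false, not_true_eq_false, not_false_eq_true, true_iff, iff_true, false_iff, iff_false, true_or, or_true, false_or, or_false, or_self, iff_self, Int.even_add, Int.even_mul, hj, hm, hi] <;> module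
  have F4 : ∀ {a A}, A ∈ G.lieSub V0 → A ∈ G.grade a → ∀ {b B}, B ∈ G.lieSub V0 →
      B ∈ G.grade b → ∀ x ∈ G.lieSub W0, θ a A (sg b B x) =
        G.br A (sg b B x) - (-1 : ℚ) ^ a • sg (a + b) (G.br A B) x := by
    intro a A hA hAa b B hB hBb
    have hAB := G.br_lieSub V0 hA hB
    have hABg := G.br_mem hAa hBb
    refine G.ext_lieSub W0 hW0 (θ a A ∘ₗ sg b B)
      (G.br A ∘ₗ sg b B - (-1 : ℚ) ^ a • sg (a + b) (G.br A B)) (fun j w hw => ?_) ?_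
    · simp only [LinearMap.comp_apply, LinearMap.sub_apply, LinearMap.smul_apply]
      rw [hsg_Aw (inV hB) hBb (w0 hw), hsg_Aw (inV hAB) hABg (w0 hw), map_smul, map_smul,
        F3 hA hAa hw B hB, hsg_der (inW (gW hw)) (hW0 j hw) A B hAa]
      by_cases hj : Even a <;> by_cases hm : Even j <;> by_cases hi : Even b <;>
        simp only [sgn_ez, Int.even_sub, even_neg, Int.not_even_one, even_two, if_true, if_false, not_true_eq_false, not_false_eq_true, true_iff, iff_true, false_iff, iff_false, true_or, or_true, false_or, or_false, or_self, iff_self, Int.even_add, Int.even_mul, hj, hm, hi] <;> module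
    intro m n x y hx hy hxV hyV h1 h2
    simp only [LinearMap.comp_apply, LinearMap.sub_apply, LinearMap.smul_apply] at *
    rw [hsg_der (inV hB) hBb x y hx, map_add, map_smul, 
      θder hA hAa _ y (hsg_grade (inV hB) hBb hx), θder hA hAa x _ hx,
      θW hA hAa x hxV, θW hA hAa y hyV, h1, h2, hsg_der (inV hAB) hABg x y hx,
      map_add, map_smul, G.jacobi y hAa (hsg_grade (inV hB) hBb hx), G.jacobi _ hAa hx]
    simp only [map_sub, map_smul, LinearMap.sub_apply, LinearMap.smul_apply]
    by_cases hj : Even a <;> by_cases hm : Even b <;> by_cases hi : Even m <;>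
        simp only [sgn_ez, Int.even_sub, even_neg, Int.not_even_one, even_two, if_true, if_false, not_true_eq_false, not_false_eq_true, true_iff, iff_true, false_iff, iff_false, true_or, or_true, false_or, or_false, or_self, iff_self, Int.even_add, Int.even_mul, hj, hm, hi] <;> module
  have rV : ∀ M : Mag V0, Mag.real G M ∈ G.lieSub V0 := by
    intro M
    induction M with
    | of i v hv => exact gV hv
    | mul A B hA hB => exact G.br_lieSub V0 hA hB
  have rg : ∀ M : Mag V0, Mag.real G M ∈ G.grade (Mag.deg M) := by
    intro M
    induction M with
    | of i v hv => exact hV0 i hv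
    | mul A B hA hB => exact G.br_mem hA hB
  have stg : ∀ {t T}, T ∈ G.lieSub W0 → T ∈ G.grade t → ∀ M : Mag V0,
      Mag.star G sg t M T ∈ G.grade (Mag.deg M + t + 2) := by
    intro t T hT hTt M
    induction M with
    | of i v hv => exact zero_mem _
    | mul A B hA hB =>
      simp only [Mag.star, Mag.deg]
      refine add_mem (add_mem (Submodule.smul_mem _ _ ?_) (Submodule.smul_mem _ _ ?_)) ?_
      · have := hsg_grade (inV (rV A)) (rg A) (hsg_grade (inV (rV B)) (rg B) hTt)
        convert this using 2; ring
      · convert G.br_mem hA (rg B) using 2; ring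
      · convert G.br_mem (rg A) hB using 2; ring
  intro M A hMA _ _ t T hT hTt
  subst hMA
  induction M with
  | of i v hv =>
    simp only [Mag.star, Mag.deg, Mag.real, map_zero]
    rw [hsg_Av (inW hT) hTt (v0 hv)]
    by_cases hi : Even i <;> by_cases ht : Even t <;> simp only [sgn_ez, Int.even_sub, even_neg, Int.not_even_one, even_two, if_true, if_false, not_true_eq_false, not_false_eq_true, true_iff, iff_true, false_iff, iff_false, true_or, or_true, false_or, or_false, or_self, iff_self, Int.even_mul, hi, ht] <;> module
  | mul A B hA hB =>
    have hA := hA (rV A) (rg A)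
    have hB := hB (rV B) (rg B)
    have hF4 := F4 (rV A) (rg A) (rV B) (rg B) T hT
    rw [θdef, F2 (rV B) (rg B) T hT, hsg_der (inV (rV A)) (rg A) _ T (rg B),
      sAV (rV A) (rg A) _ (rV B), ← eq_sub_iff_add_eq] at hF4
    simp only [Mag.star, Mag.deg, Mag.real]
    rw [map_add, map_add, map_smul, map_smul, hD_der _ _ (stg hT hTt A), hD_der _ _ (rg A),
      DV _ (rV A), DV _ (rV B), hA, hB, hF4, hsg_der (inW hT) hTt _ _ (rg A),]
    simp only [map_add, map_neg, map_smul, LinearMap.add_apply, LinearMap.neg_apply,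
      LinearMap.smul_apply, map_zero, LinearMap.zero_apply]
    rw [G.antisymm (hsg_grade (inV (rV A)) (rg A) hTt) (rg B)]
    by_cases ha : Even A.deg <;> by_cases hb : Even B.deg <;> by_cases ht : Even t <;>
        simp only [sgn_ez, Int.even_sub, even_neg, Int.not_even_one, even_two, if_true, if_false, not_true_eq_false, not_false_eq_true, true_iff, iff_true, false_iff, iff_false, true_or, or_true, false_or, or_false, or_self, iff_self, Int.even_add, Int.even_mul, ha, hb, ht] <;> module
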